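/- arXiv:math/0701670 — 4 statements merged into one kernel-verified Lean document; each statement's English description precedes it below -/
import Mathlib

section
/- Let f = Σ_{i=1}^{m} c_i X^{α_i} be a nonzero polynomial in ℂ[x_1,…,x_n] with distinct exponent vectors α_1,…,α_m, and let p_1,…,p_{m−1} ∈ ℂ^n be zeros of f. Let G be the determinant of the m×m matrix over ℂ[x_1,…,x_n] whose first row consists of the monomials X^{α_1},…,X^{α_m} and whose (i+1)-th row (for i = 1,…,m−1) consists of the constant polynomials P_i^{α_1},…,P_i^{α_m}, where P_i^{α_j} denotes the value of the monomial X^{α_j} at the point p_i. If G ≠ 0, then there exists a nonzero constant c₀ ∈ ℂ such that f = c₀ · G. -/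
open MvPolynomial

/-!
Multiplying the interpolation matrix `M` by the coefficient vector `c` of `f` gives `f` in the
first coordinate, and zero elsewhere because `f` vanishes at the points. Multiplying by the
adjugate of `M` turns this into Cramer's rule `cⱼ · G = dⱼ · f` for every `j`, where `dⱼ` is the
cofactor of the entry `(0, j)`. This cofactor is a scalar, since its minor avoids the first row.
If `cⱼ ≠ 0`, then `cⱼ · G ≠ 0` forces `dⱼ ≠ 0`, and `c₀ = cⱼ / dⱼ`.
-/

section

open Matrix

theorem det_mul_eq_adjugate_mul_of_mulVec_eq_single {ι R : Type*} [Fintype ι] [DecidableEq ι]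
    [CommRing R] {M : Matrix ι ι R} {v : ι → R} {i : ι} {a : R} (h : M *ᵥ v = Pi.single i a)
    (j : ι) : M.det * v j = M.adjugate j i * a :=
  calc
    M.det * v j = (M.adjugate *ᵥ (M *ᵥ v)) j := by
      rw [mulVec_mulVec, adjugate_mul, smul_mulVec, one_mulVec, Pi.smul_apply, smul_eq_mul]
    _ = M.adjugate j i * a := by rw [h, mulVec_single, Pi.smul_apply, op_smul_eq_mul, col_apply]

section InterpolationMatrix

variable {R A : Type*} [CommRing R] [CommRing A] [Algebra R A] {m : ℕ}

/-- The square matrix over `A` with first row `g` and with the rows of the scalar matrix `V` below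
it. In interpolation, `V i j` is the value at the `i`-th node of the `j`-th basis function `g j`;
the nodes enter only through these values. -/
def interpolationMatrix (g : Fin (m + 1) → A) (V : Matrix (Fin m) (Fin (m + 1)) R) :
    Matrix (Fin (m + 1)) (Fin (m + 1)) A :=
  of (Fin.cases g fun i j => algebraMap R A (V i j))

/-- The signed minor of `V` omitting column `j`, which is the cofactor of the entry `(0, j)` of
every `interpolationMatrix g V`. -/
def signedMaximalMinor (V : Matrix (Fin m) (Fin (m + 1)) R) (j : Fin (m + 1)) : R :=
  (-1) ^ (j : ℕ) * (V.submatrix id j.succAbove).det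

theorem adjugate_interpolationMatrix_apply_zero (g : Fin (m + 1) → A)
    (V : Matrix (Fin m) (Fin (m + 1)) R) (j : Fin (m + 1)) :
    (interpolationMatrix g V).adjugate j 0 = algebraMap R A (signedMaximalMinor V j) := by
  have minor_eq : (interpolationMatrix g V).submatrix (Fin.succAbove 0) j.succAbove =
      (algebraMap R A).mapMatrix (V.submatrix id j.succAbove) := by
    ext i k
    simp [interpolationMatrix]
  rw [adjugate_fin_succ_eq_det_submatrix, minor_eq, ← RingHom.map_det]
  simp [signedMaximalMinor]

theorem interpolationMatrix_mulVec_algebraMap (g : Fin (m + 1) → A)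
    {V : Matrix (Fin m) (Fin (m + 1)) R} {c : Fin (m + 1) → R} (hc : V *ᵥ c = 0) :
    interpolationMatrix g V *ᵥ (algebraMap R A ∘ c) = Pi.single 0 (∑ j, c j • g j) := by
  ext i
  cases i using Fin.cases with
  | zero => simp [interpolationMatrix, mulVec, dotProduct, Algebra.smul_def, mul_comm]
  | succ i =>
    calc
      (interpolationMatrix g V *ᵥ (algebraMap R A ∘ c)) i.succ = algebraMap R A ((V *ᵥ c) i) := by
        simp [interpolationMatrix, mulVec, dotProduct]
      _ = Pi.single (M := fun _ => A) 0 (∑ j, c j • g j) i.succ := by simp [hc]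

theorem smul_det_interpolationMatrix (g : Fin (m + 1) → A)
    {V : Matrix (Fin m) (Fin (m + 1)) R} {c : Fin (m + 1) → R} (hc : V *ᵥ c = 0)
    (j : Fin (m + 1)) :
    c j • (interpolationMatrix g V).det = signedMaximalMinor V j • ∑ k, c k • g k := by
  rw [Algebra.smul_def, Algebra.smul_def, ← adjugate_interpolationMatrix_apply_zero g V j, mul_comm]
  exact det_mul_eq_adjugate_mul_of_mulVec_eq_single (interpolationMatrix_mulVec_algebraMap g hc) j

end InterpolationMatrix

theorem interpolation_determinant_recovers_polynomial_general {K A : Type*} [Field K] [CommRing A]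
    [Algebra K A] {m : ℕ} (g : Fin (m + 1) → A) (c : Fin (m + 1) → K) {f : A}
    (hf : f = ∑ j, c j • g j) (hf0 : f ≠ 0) (φ : Fin m → A →ₗ[K] K) (hφ : ∀ i, φ i f = 0)
    (hG0 : (interpolationMatrix g (of fun i j => φ i (g j))).det ≠ 0) :
    ∃ c₀ : K, c₀ ≠ 0 ∧ f = c₀ • (interpolationMatrix g (of fun i j => φ i (g j))).det := by
  set V : Matrix (Fin m) (Fin (m + 1)) K := of fun i j => φ i (g j)
  have hVc : V *ᵥ c = 0 := by
    ext i
    simpa [V, hf, mulVec, dotProduct, mul_comm] using hφ i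
  obtain ⟨j, hj⟩ : ∃ j, c j ≠ 0 := by
    by_contra! hc
    exact hf0 (by simp [hf, hc])
  have cramer : c j • (interpolationMatrix g V).det = signedMaximalMinor V j • f :=
    hf ▸ smul_det_interpolationMatrix g hVc j
  have hd : signedMaximalMinor V j ≠ 0 :=
    left_ne_zero_of_smul (cramer ▸ smul_ne_zero hj hG0)
  refine ⟨(signedMaximalMinor V j)⁻¹ * c j, mul_ne_zero (inv_ne_zero hd) hj, ?_⟩
  rw [mul_smul, cramer, inv_smul_smul₀ hd]

end

/-- If `f = Σ cᵢ X^{αᵢ}` is a nonzero polynomial with distinct exponent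
vectors, `p₁, …, pₘ` are zeros of `f`, and the determinant `G` of the `(m+1)×(m+1)`
matrix whose first row consists of the monomials `X^{αⱼ}` and whose remaining rows
consist of the values of these monomials at the points `pᵢ` is nonzero, then
`f = c₀ · G` for some nonzero constant `c₀`. -/
theorem interpolation_determinant_recovers_polynomial
    (n m : ℕ)
    (α : Fin (m + 1) → (Fin n →₀ ℕ)) (hα : Function.Injective α)
    (c : Fin (m + 1) → ℂ)
    (f : MvPolynomial (Fin n) ℂ)
    (hf : f = ∑ i : Fin (m + 1), monomial (α i) (c i))
    (hf0 : f ≠ 0)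
    (p : Fin m → (Fin n → ℂ))
    (hp : ∀ i : Fin m, eval (p i) f = 0)
    (G : MvPolynomial (Fin n) ℂ)
    (hG : G = Matrix.det (Matrix.of (Fin.cases
      (fun j : Fin (m + 1) => monomial (α j) (1 : ℂ))
      (fun (i : Fin m) (j : Fin (m + 1)) =>
        C (eval (p i) (monomial (α j) (1 : ℂ)))))))
    (hG0 : G ≠ 0) :
    ∃ c₀ : ℂ, c₀ ≠ 0 ∧ f = C c₀ * G := by
  subst hG
  simp only [← smul_eq_C_mul]
  exact interpolation_determinant_recovers_polynomial_general
    (fun j => monomial (α j) 1) c (by simpa [smul_monomial] using hf) hf0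
    (fun i => (aeval (p i)).toLinearMap) hp hG0
end

section
/- Let n₀/n₁ be a rational number in lowest terms with n₀, n₁ positive integers, let L be an integer with L ≥ max(n₁, 2), let K be a positive integer, and let r be a real number with 0 < |r − n₀/n₁| < 1/((2K+2)·L·(L−1)). Let [a₀; a₁, …, a_N] be the canonical regular continued fraction expansion of n₀/n₁ and let [b₀; b₁, b₂, …] be the canonical regular continued fraction expansion of r. Then one of the following two statements holds: (i) bᵢ = aᵢ for i = 0, …, N, the expansion of r has at least N+2 partial quotients, and b_{N+1} ≥ K; or (ii) bᵢ = aᵢ for i = 0, …, N−1, b_N = a_N − 1, b_{N+1} = 1, the expansion of r has at least N+3 partial quotients, and b_{N+2} ≥ K. -/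
open GenContFract

/-- The `i`-th partial quotient of the canonical regular continued fraction expansion
of a real number `x`, produced by the Gauss-map algorithm: `some` of the integer part
computed at step `i`, or `none` if the algorithm has already terminated. -/
noncomputable def cfPartialQuotient (x : ℝ) (i : ℕ) : Option ℤ :=
  (IntFractPair.stream x i).map IntFractPair.b

/-!
Write `[a₀; …, aₙ₋₁, y] = (p y + p') / (q y + q')`, where the integers `p, p', q, q'` are the
entries of `∏ (aᵢ 1; 1 0)`, of determinant `±1`. If `x = [a₀; …, a_N] = p / q` in lowest terms,
every real `r ≠ x` is `[a₀; …, a_N, y]` for some `y` with `|q y + q'| = 1 / (q |r - x|)`. As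
`0 ≤ q' ≤ q`, closeness of `r` to `x` forces `y > K` or `y < -(K + 1)`. In the first case `y` is the
complete quotient of `r` after `a_N`. In the second, `z = -y - 1 > K` and
`a_N + 1 / y = (a_N - 1) + 1 / (1 + 1 / z)`, so that the expansion of `r` continues from `a_{N-1}`
with `a_N - 1, 1` and then with that of `z`.
-/

/-- `y` is the `n`-th complete quotient of `x`: the real number on which the Gauss-map algorithm
for `x` operates at step `n`. -/
def IsCompleteQuotient (x : ℝ) (n : ℕ) (y : ℝ) : Prop :=
  IntFractPair.stream x n = some (IntFractPair.of y)

namespace IsCompleteQuotient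

variable {x y : ℝ} {n : ℕ}

theorem zero (x : ℝ) : IsCompleteQuotient x 0 x :=
  IntFractPair.stream_zero x

theorem cfPartialQuotient_eq (h : IsCompleteQuotient x n y) :
    cfPartialQuotient x n = some ⌊y⌋ := by
  rw [cfPartialQuotient, h, Option.map_some, IntFractPair.of]

theorem succ (h : IsCompleteQuotient x n y) (hy : Int.fract y ≠ 0) :
    IsCompleteQuotient x (n + 1) (Int.fract y)⁻¹ :=
  IntFractPair.stream_succ_of_some h hy

theorem cfPartialQuotient_succ_eq_none_iff (h : IsCompleteQuotient x n y) :
    cfPartialQuotient x (n + 1) = none ↔ Int.fract y = 0 := by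
  refine ⟨fun hnone => ?_, fun hy => ?_⟩
  · by_contra hy
    simp [(h.succ hy).cfPartialQuotient_eq] at hnone
  · rw [cfPartialQuotient, IntFractPair.stream_eq_none_of_fr_eq_zero h hy, Option.map_none]

theorem of_intCast_add_inv {m : ℤ} (hy : 1 < y) (h : IsCompleteQuotient x n (m + y⁻¹)) :
    cfPartialQuotient x n = some m ∧ IsCompleteQuotient x (n + 1) y := by
  have hpos : 0 < y⁻¹ := by positivity
  have hfract : Int.fract (m + y⁻¹) = y⁻¹ := by
    rw [Int.fract_intCast_add, Int.fract_eq_self]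
    exact ⟨hpos.le, inv_lt_one_of_one_lt₀ hy⟩
  have hfloor : ⌊m + y⁻¹⌋ = m := by
    rw [Int.floor_eq_iff]
    exact ⟨by linarith, by linarith [inv_lt_one_of_one_lt₀ hy]⟩
  refine ⟨hfloor ▸ h.cfPartialQuotient_eq, ?_⟩
  simpa only [hfract, inv_inv] using h.succ (by rw [hfract]; exact hpos.ne')

end IsCompleteQuotient

theorem one_le_of_cfPartialQuotient_succ_eq_some {x : ℝ} {n : ℕ} {m : ℤ}
    (h : cfPartialQuotient x (n + 1) = some m) : 1 ≤ m := by
  obtain ⟨p, hp, rfl⟩ := Option.map_eq_some_iff.1 h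
  exact IntFractPair.one_le_succ_nth_stream_b hp

/-- The matrix `(pₙ₋₁ pₙ₋₂; qₙ₋₁ qₙ₋₂)` of continuants of `a₀, …, aₙ₋₁`: its columns hold the
numerators and denominators of the convergents `[a₀; …, aₙ₋₁]` and `[a₀; …, aₙ₋₂]`. -/
def continuantMatrix (a : ℕ → ℤ) : ℕ → Matrix (Fin 2) (Fin 2) ℤ
  | 0 => 1
  | n + 1 => continuantMatrix a n * !![a n, 1; 1, 0]

section Continuants

variable (a : ℕ → ℤ) (n : ℕ)

theorem continuantMatrix_succ_apply_zero (i : Fin 2) :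
    continuantMatrix a (n + 1) i 0 = continuantMatrix a n i 0 * a n + continuantMatrix a n i 1 := by
  simp [continuantMatrix, Matrix.mul_apply]

theorem continuantMatrix_succ_apply_one (i : Fin 2) :
    continuantMatrix a (n + 1) i 1 = continuantMatrix a n i 0 := by
  simp [continuantMatrix, Matrix.mul_apply]

theorem det_continuantMatrix : (continuantMatrix a n).det = (-1) ^ n := by
  induction n with
  | zero => exact Matrix.det_one
  | succ n ih => simp [continuantMatrix, ih, pow_succ, Matrix.det_fin_two_of]

theorem isCoprime_continuantMatrix :
    IsCoprime (continuantMatrix a n 0 0) (continuantMatrix a n 1 0) := by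
  have hdet := det_continuantMatrix a n
  rw [Matrix.det_fin_two] at hdet
  have hsq : ((-1 : ℤ) ^ n) ^ 2 = 1 := by rw [← pow_mul', pow_mul, neg_one_sq, one_pow]
  exact ⟨(-1) ^ n * continuantMatrix a n 1 1, -(-1) ^ n * continuantMatrix a n 0 1,
    by linear_combination (-1) ^ n * hdet + hsq⟩

variable {a n}

theorem continuantMatrix_denominator_bounds (ha : ∀ i < n, 1 ≤ a (i + 1)) :
    0 < continuantMatrix a (n + 1) 1 0 ∧ 0 ≤ continuantMatrix a (n + 1) 1 1 ∧
      continuantMatrix a (n + 1) 1 1 ≤ continuantMatrix a (n + 1) 1 0 := by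
  induction n with
  | zero => simp [continuantMatrix]
  | succ n ih =>
    obtain ⟨hq, hq', -⟩ := ih fun i hi => ha i (hi.trans n.lt_succ_self)
    rw [continuantMatrix_succ_apply_zero a (n + 1), continuantMatrix_succ_apply_one a (n + 1)]
    have hmul := le_mul_of_one_le_right hq.le (ha n n.lt_succ_self)
    exact ⟨by linarith, hq.le, by linarith⟩

end Continuants

/-- The value of the continued fraction `[a₀; a₁, …, aₙ₋₁, y]`, as a Möbius transform of `y`: with a
single division, no intermediate denominator of the nested fraction can vanish. -/
noncomputable def cfWithTail (a : ℕ → ℤ) (n : ℕ) (y : ℝ) : ℝ :=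
  (continuantMatrix a n 0 0 * y + continuantMatrix a n 0 1) /
    (continuantMatrix a n 1 0 * y + continuantMatrix a n 1 1)

section Expansion

variable {a : ℕ → ℤ} {n : ℕ} {x y : ℝ}

theorem cfWithTail_zero : cfWithTail a 0 y = y := by
  simp [cfWithTail, continuantMatrix]

theorem cfWithTail_succ (hy : y ≠ 0) : cfWithTail a (n + 1) y = cfWithTail a n (a n + y⁻¹) := by
  have mul_tail (i : Fin 2) :
      continuantMatrix a (n + 1) i 0 * y + continuantMatrix a (n + 1) i 1 =
        (continuantMatrix a n i 0 * (a n + y⁻¹) + continuantMatrix a n i 1) * y := by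
    rw [continuantMatrix_succ_apply_zero, continuantMatrix_succ_apply_one]
    push_cast
    field_simp
    ring
  rw [cfWithTail, cfWithTail, mul_tail, mul_tail, mul_div_mul_right _ _ hy]

theorem cfWithTail_intCast_eq_div :
    cfWithTail a n (a n) = continuantMatrix a (n + 1) 0 0 / continuantMatrix a (n + 1) 1 0 := by
  simp only [cfWithTail, continuantMatrix_succ_apply_zero, Int.cast_add, Int.cast_mul]

theorem den_eq_of_cfWithTail_intCast_eq {x : ℚ} (ha : ∀ i < n, 1 ≤ a (i + 1))
    (hx : cfWithTail a n (a n) = x) : (x.den : ℤ) = continuantMatrix a (n + 1) 1 0 := by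
  rw [cfWithTail_intCast_eq_div] at hx
  obtain rfl : (continuantMatrix a (n + 1) 0 0 / continuantMatrix a (n + 1) 1 0 : ℚ) = x :=
    mod_cast hx
  exact Rat.den_div_eq_of_coprime (continuantMatrix_denominator_bounds ha).1
    (Int.isCoprime_iff_gcd_eq_one.1 (isCoprime_continuantMatrix a (n + 1)))

theorem exists_isCompleteQuotient_cfWithTail_eq
    (ha : ∀ i ≤ n, cfPartialQuotient x i = some (a i)) :
    ∃ y, IsCompleteQuotient x n y ∧ (n = 0 ∨ 1 < y) ∧ cfWithTail a n y = x := by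
  induction n with
  | zero => exact ⟨x, .zero x, .inl rfl, cfWithTail_zero⟩
  | succ n ih =>
    obtain ⟨y, hquot, -, rfl⟩ := ih fun i hi => ha i (hi.trans n.le_succ)
    have hfract : Int.fract y ≠ 0 := by
      simp [← hquot.cfPartialQuotient_succ_eq_none_iff.ne, ha (n + 1) le_rfl]
    have hfloor : ⌊y⌋ = a n :=
      Option.some_injective _ (hquot.cfPartialQuotient_eq.symm.trans (ha n n.le_succ))
    refine ⟨(Int.fract y)⁻¹, hquot.succ hfract, .inr ?_, ?_⟩
    · exact (one_lt_inv₀ ((Int.fract_nonneg y).lt_of_ne' hfract)).2 (Int.fract_lt_one y)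
    · rw [cfWithTail_succ (inv_ne_zero hfract), inv_inv, ← hfloor, Int.floor_add_fract]

theorem one_lt_last_and_cfWithTail_eq_of_terminates
    (ha : ∀ i ≤ n, cfPartialQuotient x i = some (a i))
    (hend : cfPartialQuotient x (n + 1) = none) :
    (n = 0 ∨ 1 < a n) ∧ cfWithTail a n (a n) = x := by
  obtain ⟨y, hquot, hy, hx⟩ := exists_isCompleteQuotient_cfWithTail_eq ha
  have hfloor : ⌊y⌋ = a n :=
    Option.some_injective _ (hquot.cfPartialQuotient_eq.symm.trans (ha n le_rfl))
  obtain rfl : y = a n := by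
    rw [← hfloor, ← sub_eq_zero]
    exact hquot.cfPartialQuotient_succ_eq_none_iff.1 hend
  exact ⟨mod_cast hy, hx⟩

theorem cfPartialQuotient_cfWithTail (ha : ∀ i, i + 1 < n → 1 ≤ a (i + 1)) (hy : n = 0 ∨ 1 < y) :
    (∀ i < n, cfPartialQuotient (cfWithTail a n y) i = some (a i)) ∧
      IsCompleteQuotient (cfWithTail a n y) n y := by
  induction n generalizing y with
  | zero => exact ⟨fun i hi => absurd hi i.not_lt_zero, cfWithTail_zero ▸ .zero y⟩
  | succ n ih =>
    have hy : 1 < y := hy.resolve_left n.succ_ne_zero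
    have hy_pos : 0 < y := one_pos.trans hy
    have htail : n = 0 ∨ 1 < a n + y⁻¹ := by
      refine n.eq_zero_or_pos.imp_right fun hn => ?_
      obtain ⟨m, rfl⟩ := Nat.exists_eq_add_one.2 hn
      have : (1 : ℝ) ≤ a (m + 1) := mod_cast ha m (m + 1).lt_succ_self
      linarith [inv_pos.2 hy_pos]
    obtain ⟨hinit, hquot⟩ := ih (fun i hi => ha i (hi.trans n.lt_succ_self)) htail
    rw [cfWithTail_succ hy_pos.ne']
    obtain ⟨hlast, hnext⟩ := hquot.of_intCast_add_inv hy
    refine ⟨fun i hi => ?_, hnext⟩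
    obtain hi | rfl := Nat.lt_succ_iff_lt_or_eq.1 hi
    exacts [hinit i hi, hlast]

theorem cfPartialQuotient_cfWithTail_neg {z : ℝ} (ha : ∀ i, i + 1 < n → 1 ≤ a (i + 1))
    (han : n = 0 ∨ 1 < a n) (hz : 1 < z) :
    (∀ i < n, cfPartialQuotient (cfWithTail a (n + 1) (-(z + 1))) i = some (a i)) ∧
      cfPartialQuotient (cfWithTail a (n + 1) (-(z + 1))) n = some (a n - 1) ∧
      cfPartialQuotient (cfWithTail a (n + 1) (-(z + 1))) (n + 1) = some 1 ∧
      IsCompleteQuotient (cfWithTail a (n + 1) (-(z + 1))) (n + 2) z := by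
  have hz_pos : 0 < z := one_pos.trans hz
  have hone : 1 < ((1 : ℤ) : ℝ) + z⁻¹ := by simpa using hz_pos
  have hsplit : a n + (-(z + 1))⁻¹ = ((a n - 1 : ℤ) : ℝ) + (((1 : ℤ) : ℝ) + z⁻¹)⁻¹ := by
    have : z + 1 ≠ 0 := by positivity
    push_cast
    field_simp
    ring
  have htail : n = 0 ∨ 1 < ((a n - 1 : ℤ) : ℝ) + (((1 : ℤ) : ℝ) + z⁻¹)⁻¹ := by
    refine han.imp_right fun h => ?_
    have : (1 : ℝ) ≤ (a n - 1 : ℤ) := mod_cast Int.le_sub_one_of_lt h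
    linarith [inv_pos.2 (one_pos.trans hone)]
  rw [cfWithTail_succ (by linarith), hsplit]
  obtain ⟨hinit, hquot⟩ := cfPartialQuotient_cfWithTail ha htail
  obtain ⟨hlast, hquot_one⟩ := hquot.of_intCast_add_inv hone
  obtain ⟨hunit, hquot_z⟩ := hquot_one.of_intCast_add_inv hz
  exact ⟨hinit, hlast, hunit, hquot_z⟩

end Expansion

section OrderedField

variable {F : Type*} [Field F] [LinearOrder F] [IsStrictOrderedRing F]

theorem exists_moebius_eq {p p' q q' r : F} (hdet : |p * q' - p' * q| = 1) (hq : 0 < q)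
    (hr : r ≠ p / q) :
    ∃ y, r = (p * y + p') / (q * y + q') ∧ |q * y + q'| = 1 / (q * |r - p / q|) := by
  have hsub : p - r * q ≠ 0 := fun h => hr (by rw [eq_div_iff hq.ne']; linarith)
  have hdet_ne : p * q' - p' * q ≠ 0 := abs_ne_zero.1 (hdet ▸ one_ne_zero)
  obtain ⟨y, hy⟩ : ∃ y, y * (p - r * q) = r * q' - p' := ⟨_, div_mul_cancel₀ _ hsub⟩
  have hnum : p * y + p' = r * ((p * q' - p' * q) / (p - r * q)) := by
    rw [← mul_div_assoc, eq_div_iff hsub]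
    linear_combination p * hy
  have hden : q * y + q' = (p * q' - p' * q) / (p - r * q) := by
    rw [eq_div_iff hsub]
    linear_combination q * hy
  have hdist : q * |r - p / q| = |p - r * q| := by
    rw [← abs_of_pos hq, ← abs_mul, abs_of_pos hq, abs_sub_comm p, mul_sub,
      mul_div_cancel₀ _ hq.ne', mul_comm q r]
  refine ⟨y, ?_, ?_⟩
  · rw [hnum, hden, mul_div_cancel_right₀ _ (div_ne_zero hdet_ne hsub)]
  · rw [hden, abs_div, hdet, hdist]

theorem lt_or_lt_neg_of_lt_abs {q q' K y : F} (hq : 0 < q) (hq' : 0 ≤ q') (hle : q' ≤ q)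
    (h : (K + 1) * q < |q * y + q'|) : K < y ∨ y < -(K + 1) := by
  obtain h | h := lt_abs.1 h
  · exact .inl (lt_of_mul_lt_mul_left (by linarith) hq.le)
  · exact .inr (lt_of_mul_lt_mul_left (by linarith) hq.le)

end OrderedField

theorem exists_cfWithTail_eq_of_abs_sub_lt {x : ℚ} {K r : ℝ} (hK : 0 ≤ K) (hne : r ≠ x)
    (hlt : |r - x| < 1 / ((K + 1) * (x.den : ℝ) ^ 2)) {N : ℕ} {a : ℕ → ℤ}
    (ha : ∀ i < N, 1 ≤ a (i + 1)) (hx : cfWithTail a N (a N) = x) :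
    ∃ y, r = cfWithTail a (N + 1) y ∧ (K < y ∨ y < -(K + 1)) := by
  obtain ⟨hq, hq', hle⟩ := continuantMatrix_denominator_bounds ha
  have hden : (x.den : ℝ) = continuantMatrix a (N + 1) 1 0 :=
    mod_cast den_eq_of_cfWithTail_intCast_eq ha hx
  have hdet : |(continuantMatrix a (N + 1) 0 0 * continuantMatrix a (N + 1) 1 1 -
      continuantMatrix a (N + 1) 0 1 * continuantMatrix a (N + 1) 1 0 : ℝ)| = 1 := by
    have := congrArg abs (det_continuantMatrix a (N + 1))
    rw [Matrix.det_fin_two, abs_neg_one_pow] at this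
    exact_mod_cast this
  have hqR : (0 : ℝ) < continuantMatrix a (N + 1) 1 0 := mod_cast hq
  rw [hden, ← hx, cfWithTail_intCast_eq_div] at hlt
  rw [← hx, cfWithTail_intCast_eq_div] at hne
  obtain ⟨y, hy, habs⟩ := exists_moebius_eq hdet hqR hne
  refine ⟨y, hy, lt_or_lt_neg_of_lt_abs hqR (Int.cast_nonneg hq') (Int.cast_le.2 hle) ?_⟩
  have hdist := abs_sub_pos.2 hne
  rw [lt_div_iff₀ (by positivity)] at hlt
  rw [habs, lt_div_iff₀ (by positivity)]
  linarith

theorem continued_fraction_of_approximation_general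
    (x : ℚ) (K : ℕ) (hK : 0 < K) (r : ℝ) (hne : r ≠ x)
    (hlt : |r - x| < 1 / (((K : ℝ) + 1) * (x.den : ℝ) ^ 2))
    (N : ℕ) (a : ℕ → ℤ) (ha : ∀ i ≤ N, cfPartialQuotient x i = some (a i))
    (haN : cfPartialQuotient x (N + 1) = none) :
    ((∀ i ≤ N, cfPartialQuotient r i = some (a i)) ∧
      ∃ q : ℤ, cfPartialQuotient r (N + 1) = some q ∧ (K : ℤ) ≤ q) ∨
    ((∀ i < N, cfPartialQuotient r i = some (a i)) ∧
      cfPartialQuotient r N = some (a N - 1) ∧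
      cfPartialQuotient r (N + 1) = some 1 ∧
      ∃ q : ℤ, cfPartialQuotient r (N + 2) = some q ∧ (K : ℤ) ≤ q) := by
  have ha_pos : ∀ i < N, 1 ≤ a (i + 1) := fun i hi =>
    one_le_of_cfPartialQuotient_succ_eq_some (ha (i + 1) hi)
  have hKR : (1 : ℝ) ≤ K := mod_cast hK
  obtain ⟨haN_gt, hx⟩ := one_lt_last_and_cfWithTail_eq_of_terminates ha haN
  obtain ⟨y, rfl, hy | hy⟩ := exists_cfWithTail_eq_of_abs_sub_lt K.cast_nonneg hne hlt ha_pos hx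
  · obtain ⟨hinit, hquot⟩ := cfPartialQuotient_cfWithTail (n := N + 1) (y := y)
      (fun i hi => ha_pos i (Nat.lt_of_succ_lt_succ hi)) (.inr (hKR.trans_lt hy))
    exact .inl ⟨fun i hi => hinit i (Nat.lt_succ_of_le hi), ⌊y⌋, hquot.cfPartialQuotient_eq,
      Int.le_floor.2 (mod_cast hy.le)⟩
  · obtain ⟨z, rfl⟩ : ∃ z, y = -(z + 1) := ⟨-y - 1, by ring⟩
    have hz : (K : ℝ) < z := by linarith
    obtain ⟨hinit, hlast, hunit, hquot⟩ := cfPartialQuotient_cfWithTail_neg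
      (fun i hi => ha_pos i (i.lt_succ_self.trans hi)) haN_gt (hKR.trans_lt hz)
    exact .inr ⟨hinit, hlast, hunit, ⌊z⌋, hquot.cfPartialQuotient_eq,
      Int.le_floor.2 (mod_cast hz.le)⟩

theorem one_div_mul_mul_sub_one_le_of_den_le {x : ℚ} (K : ℕ) {L : ℤ}
    (hL : max (x.den : ℤ) 2 ≤ L) :
    1 / (((2 * K + 2 : ℕ) : ℝ) * L * (L - 1)) ≤ 1 / (((K : ℝ) + 1) * (x.den : ℝ) ^ 2) := by
  have hden : (x.den : ℝ) ≤ L := mod_cast (le_max_left _ _).trans hL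
  have htwo : (2 : ℝ) ≤ L := mod_cast (le_max_right _ _).trans hL
  have hsq : (L : ℝ) ^ 2 ≤ 2 * (L * (L - 1)) := by nlinarith
  apply one_div_le_one_div_of_le (by positivity)
  calc ((K : ℝ) + 1) * (x.den : ℝ) ^ 2 ≤ (K + 1) * (L : ℝ) ^ 2 := by gcongr
    _ ≤ ((K : ℝ) + 1) * (2 * (L * (L - 1))) := by gcongr
    _ = ((2 * K + 2 : ℕ) : ℝ) * L * (L - 1) := by push_cast; ring

/-- Let `n₀/n₁` be a positive rational in lowest terms, `L ≥ max(n₁, 2)`,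
`K` a positive integer, and `r` a real number with
`0 < |r − n₀/n₁| < 1/((2K+2)·L·(L−1))`.  If the canonical continued fraction
expansion of `n₀/n₁` is `[a₀; a₁, …, a_N]`, and `bᵢ` denote the partial quotients of
the canonical expansion of `r`, then either (i) `bᵢ = aᵢ` for `i = 0, …, N` and the
expansion of `r` has a further partial quotient `b_{N+1} ≥ K`; or (ii) `bᵢ = aᵢ` for
`i = 0, …, N−1`, `b_N = a_N − 1`, `b_{N+1} = 1`, and the expansion of `r` has a
further partial quotient `b_{N+2} ≥ K`. -/
theorem continued_fraction_of_approximation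
    (n₀ n₁ : ℕ) (hn₀ : 0 < n₀) (hn₁ : 0 < n₁) (hcop : Nat.Coprime n₀ n₁)
    (L : ℤ) (hL : max (n₁ : ℤ) 2 ≤ L)
    (K : ℕ) (hK : 0 < K)
    (r : ℝ)
    (hne : 0 < |r - (n₀ : ℝ) / (n₁ : ℝ)|)
    (hlt : |r - (n₀ : ℝ) / (n₁ : ℝ)| < 1 / (((2 * K + 2 : ℕ) : ℝ) * (L : ℝ) * ((L : ℝ) - 1)))
    (N : ℕ) (a : ℕ → ℤ)
    (ha : ∀ i ≤ N, cfPartialQuotient ((n₀ : ℝ) / (n₁ : ℝ)) i = some (a i))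
    (haN : cfPartialQuotient ((n₀ : ℝ) / (n₁ : ℝ)) (N + 1) = none) :
    ((∀ i ≤ N, cfPartialQuotient r i = some (a i)) ∧
      ∃ q : ℤ, cfPartialQuotient r (N + 1) = some q ∧ (K : ℤ) ≤ q) ∨
    ((∀ i < N, cfPartialQuotient r i = some (a i)) ∧
      cfPartialQuotient r N = some (a N - 1) ∧
      cfPartialQuotient r (N + 1) = some 1 ∧
      ∃ q : ℤ, cfPartialQuotient r (N + 2) = some q ∧ (K : ℤ) ≤ q) := by
  have hden : ((n₀ / n₁ : ℚ).den : ℤ) = n₁ :=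
    Rat.den_div_eq_of_coprime (a := n₀) (mod_cast hn₁) hcop
  have hbound := one_div_mul_mul_sub_one_le_of_den_le K (hden.symm ▸ hL)
  exact continued_fraction_of_approximation_general (n₀ / n₁) K hK r
    (by simpa [sub_eq_zero] using hne) (by simpa using hlt.trans_le hbound) N a
    (by simpa using ha) (by simpa using haN)
end

section
/- Fix a monomial order on the multivariate polynomial ring ℚ[x_1,…,x_n]. Let g ∈ ℚ[x_1,…,x_n] be monic with respect to this order (its leading coefficient equals 1), and suppose g = h_1 · h_2 ⋯ h_m where each h_i ∈ ℚ[x_1,…,x_n] is monic with respect to this order. Let N > 0 be the least common multiple of the denominators of the coefficients of g. Then for every i and every monomial, the denominator of the corresponding coefficient of h_i divides N; in particular, N is an upper bound for the absolute values of the denominators of the coefficients of every h_i. -/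
open MvPolynomial

/-- The degree (leading exponent vector) of a multivariate polynomial with respect to
a monomial order `mo`: the largest exponent vector of its support in the order. -/
noncomputable def moDegree {σ : Type*} (mo : MonomialOrder σ) {R : Type*} [CommSemiring R]
    (f : MvPolynomial σ R) : σ →₀ ℕ :=
  mo.toSyn.symm (f.support.sup fun d => mo.toSyn d)

/-- A multivariate polynomial is monic with respect to a monomial order `mo` if its
leading coefficient (the coefficient at the largest exponent vector of its support)
equals `1`. -/
noncomputable def moMonic {σ : Type*} (mo : MonomialOrder σ) {R : Type*} [CommSemiring R]
    (f : MvPolynomial σ R) : Prop :=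
  MvPolynomial.coeff (moDegree mo f) f = 1

/-!
Let `f` and `g` be polynomials over the fraction field of a unique factorization domain `R`, where
`f` has a coefficient equal to `1`. If `f * g` has coefficients in `R`, then so does `g`: clearing
denominators as `D * f = F` and `E * g = G` shows that the constant `D * E` divides `F * G`, hence
splits as `a * b` with `a ∣ F` and `b ∣ G`, and `a` divides the coefficient `D` of `F`, so that `E`
divides `b` and therefore `G`. Dividing the factors other than `hᵢ` one by one out of
`N * ∏ hⱼ ∈ ℤ[x]` thus leaves `N * hᵢ ∈ ℤ[x]`.
-/

theorem mem_range_map_iff_forall_coeff {σ R S : Type*} [CommRing R] [CommRing S] {φ : R →+* S}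
    {f : MvPolynomial σ S} : f ∈ (map φ).range ↔ ∀ d, coeff d f ∈ φ.range := by
  constructor
  · rintro ⟨F, rfl⟩ d
    exact ⟨coeff d F, (coeff_map φ F d).symm⟩
  · intro hf
    refine mem_range_map_iff_coeffs_subset.mpr fun c hc => ?_
    obtain ⟨d, -, rfl⟩ := mem_coeffs_iff.mp hc
    exact hf d

theorem exists_mem_C_mul_mem_range_map {σ R S : Type*} [CommRing R] [CommRing S] [Algebra R S]
    (M : Submonoid R) [IsLocalization M S] (f : MvPolynomial σ S) :
    ∃ r ∈ M, C (algebraMap R S r) * f ∈ (map (algebraMap R S)).range := by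
  obtain ⟨⟨r, hrM⟩, hr⟩ :=
    IsLocalization.exist_integer_multiples M f.support fun d => coeff d f
  refine ⟨r, hrM, mem_range_map_iff_forall_coeff.mpr fun d => ?_⟩
  rw [coeff_C_mul]
  by_cases hd : d ∈ f.support
  · rw [← Algebra.smul_def]
    exact hr d hd
  · rw [notMem_support_iff.mp hd, mul_zero]
    exact zero_mem _

section UniqueFactorizationDomain

variable {σ R : Type*} [CommRing R] [IsDomain R] [UniqueFactorizationMonoid R]

theorem C_dvd_of_C_coeff_mul_dvd_mul {F G : MvPolynomial σ R} {e : σ →₀ ℕ} {r : R}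
    (he : coeff e F ≠ 0) (hdvd : C (coeff e F * r) ∣ F * G) : C r ∣ G := by
  rcases eq_or_ne r 0 with rfl | hr
  · have hF : F ≠ 0 := fun hF => he (by rw [hF, coeff_zero])
    simpa [hF] using hdvd
  obtain ⟨A, B, hAF, hBG, hAB⟩ := exists_dvd_and_dvd_of_dvd_mul hdvd
  have hc : coeff e F * r ≠ 0 := mul_ne_zero he hr
  obtain ⟨a, -, rfl⟩ := (dvd_C_iff_exists hc).mp (Dvd.intro _ hAB.symm)
  obtain ⟨b, -, rfl⟩ := (dvd_C_iff_exists hc).mp (Dvd.intro_left _ hAB.symm)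
  have hab : coeff e F * r = a * b := C_injective σ R (by rw [hAB, C_mul])
  have hrb : r ∣ b := by
    refine (mul_dvd_mul_iff_left (left_ne_zero_of_mul (hab ▸ hc))).mp ?_
    rw [← hab]
    exact mul_dvd_mul_right ((C_dvd_iff_dvd_coeff a F).mp hAF e) r
  exact (map_dvd C hrb).trans hBG

variable {K : Type*} [Field K] [Algebra R K] [IsFractionRing R K]

theorem mem_range_map_of_mul_mem {f g : MvPolynomial σ K} (hf : 1 ∈ f.coeffs)
    (hfg : f * g ∈ (map (algebraMap R K)).range) : g ∈ (map (algebraMap R K)).range := by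
  obtain ⟨e, -, he⟩ := mem_coeffs_iff.mp hf
  obtain ⟨H, hH⟩ := hfg
  obtain ⟨r, hr, F, hF⟩ := exists_mem_C_mul_mem_range_map (nonZeroDivisors R) f
  obtain ⟨s, hs, G, hG⟩ := exists_mem_C_mul_mem_range_map (nonZeroDivisors R) g
  have hinj : Function.Injective (algebraMap R K) := IsFractionRing.injective R K
  have hFe : coeff e F = r := hinj (by rw [← coeff_map, hF, coeff_C_mul, ← he, mul_one])
  have hFG : F * G = C (r * s) * H := by
    apply map_injective _ hinj
    simp only [map_mul, hF, hG, hH, map_C]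
    ring
  obtain ⟨G', rfl⟩ : C s ∣ G :=
    C_dvd_of_C_coeff_mul_dvd_mul (hFe ▸ nonZeroDivisors.ne_zero hr)
      (hFe ▸ Dvd.intro H hFG.symm)
  refine ⟨G', mul_left_cancel₀ (a := C (algebraMap R K s)) ?_ ?_⟩
  · rw [Ne, C_eq_zero, map_eq_zero_iff _ hinj]
    exact nonZeroDivisors.ne_zero hs
  · rw [← hG, map_mul, map_C]

theorem mem_range_map_of_prod_mul_mem {ι : Type*} {s : Finset ι} {f : ι → MvPolynomial σ K}
    {g : MvPolynomial σ K} (hf : ∀ i ∈ s, 1 ∈ (f i).coeffs)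
    (hfg : (∏ i ∈ s, f i) * g ∈ (map (algebraMap R K)).range) :
    g ∈ (map (algebraMap R K)).range := by
  induction s using Finset.cons_induction_on with
  | empty => simpa using hfg
  | cons i s hi ih =>
    rw [Finset.prod_cons, mul_assoc] at hfg
    exact ih (fun j hj => hf j (Finset.mem_cons_of_mem hj))
      (mem_range_map_of_mul_mem (hf i (Finset.mem_cons_self i s)) hfg)

end UniqueFactorizationDomain

theorem den_dvd_iff_natCast_mul_mem_range {q : ℚ} {N : ℕ} :
    q.den ∣ N ↔ (N : ℚ) * q ∈ (algebraMap ℤ ℚ).range := by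
  constructor
  · rintro ⟨k, rfl⟩
    refine ⟨k * q.num, ?_⟩
    rw [eq_intCast, Int.cast_mul, ← q.mul_den_eq_num, Int.cast_natCast, Nat.cast_mul]
    ring
  · rintro ⟨z, hz⟩
    rcases eq_or_ne N 0 with rfl | hN
    · exact dvd_zero _
    have hq : q = Rat.divInt z N := by
      rw [Rat.divInt_eq_div, eq_div_iff (by exact_mod_cast hN), mul_comm]
      exact_mod_cast hz.symm
    exact_mod_cast hq ▸ Rat.den_dvd z N

theorem forall_den_coeff_dvd_iff {σ : Type*} {f : MvPolynomial σ ℚ} {N : ℕ} :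
    (∀ d, (coeff d f).den ∣ N) ↔ C (N : ℚ) * f ∈ (map (algebraMap ℤ ℚ)).range := by
  simp only [mem_range_map_iff_forall_coeff, coeff_C_mul, den_dvd_iff_natCast_mul_mem_range]

theorem den_coeff_dvd_lcm {σ : Type*} (f : MvPolynomial σ ℚ) (d : σ →₀ ℕ) :
    (coeff d f).den ∣ f.support.lcm fun e => (coeff e f).den := by
  by_cases hd : d ∈ f.support
  · exact Finset.dvd_lcm (f := fun e => (coeff e f).den) hd
  · rw [notMem_support_iff.mp hd, Rat.den_zero]
    exact one_dvd _

theorem moMonic.one_mem_coeffs {σ R : Type*} [CommSemiring R] [Nontrivial R]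
    {mo : MonomialOrder σ} {f : MvPolynomial σ R} (hf : moMonic mo f) : 1 ∈ f.coeffs := by
  have hf' : coeff (moDegree mo f) f = 1 := hf
  exact hf' ▸ coeff_mem_coeffs _ (hf' ▸ one_ne_zero)

theorem denominator_bound_of_monic_factors_general {σ ι : Type*} [Fintype ι]
    (h : ι → MvPolynomial σ ℚ) (hcoeffs : ∀ i, 1 ∈ (h i).coeffs) (i : ι) (d : σ →₀ ℕ) :
    (coeff d (h i)).den ∣ (∏ j, h j).support.lcm fun e => (coeff e (∏ j, h j)).den := by
  classical
  revert d
  rw [forall_den_coeff_dvd_iff]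
  refine mem_range_map_of_prod_mul_mem (s := Finset.univ.erase i) (fun j _ => hcoeffs j) ?_
  rw [mul_left_comm, Finset.prod_erase_mul _ _ (Finset.mem_univ i)]
  exact forall_den_coeff_dvd_iff.mp (den_coeff_dvd_lcm _)

/-- If `g ∈ ℚ[x₁,…,xₙ]` is monic w.r.t. a monomial order and factors as a
product of polynomials `hᵢ` monic w.r.t. the same order, and `N > 0` is the least
common multiple of the denominators of the coefficients of `g`, then every
denominator of a coefficient of every `hᵢ` divides `N`; in particular it is at
most `N`. -/
theorem denominator_bound_of_monic_factors
    (n : ℕ) (mo : MonomialOrder (Fin n))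
    (g : MvPolynomial (Fin n) ℚ) (hg : moMonic mo g)
    (m : ℕ) (h : Fin m → MvPolynomial (Fin n) ℚ)
    (hmonic : ∀ i, moMonic mo (h i))
    (hprod : g = ∏ i, h i)
    (N : ℕ) (hN : N = g.support.lcm fun d => (MvPolynomial.coeff d g).den)
    (hNpos : 0 < N) :
    ∀ i, ∀ d : Fin n →₀ ℕ,
      (MvPolynomial.coeff d (h i)).den ∣ N ∧ (MvPolynomial.coeff d (h i)).den ≤ N := by
  intro i d
  have hdvd := denominator_bound_of_monic_factors_general h (fun j => (hmonic j).one_mem_coeffs) i d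
  rw [← hprod, ← hN] at hdvd
  exact ⟨hdvd, Nat.le_of_dvd hNpos hdvd⟩
end

section
/- Fix a monomial order on the multivariate polynomial ring ℚ[x_1,…,x_n]. Let g ∈ ℚ[x_1,…,x_n] be monic with respect to this order (its leading coefficient equals 1), and suppose g = h_1 · h_2 ⋯ h_m where each h_i ∈ ℚ[x_1,…,x_n] is monic with respect to this order. Let N > 0 be the least common multiple of the denominators of the coefficients of g, and for each i let N_i > 0 be the least common multiple of the denominators of the coefficients of h_i. Then N = N_1 · N_2 ⋯ N_m. -/
open MvPolynomial

/-!
Call `a` a least denominator of `f` when the multiples of `a` are exactly the scalars `b` such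
that `b • f` has coefficients in the base ring. If `a` is a least denominator of `f` and some
coefficient of `f` is `1`, then no nonunit constant divides `a • f`: it would divide the coefficient
`a`, and so could be cancelled from the denominator. Over a unique factorization domain, a product
of polynomials without nonunit constant divisors has no such divisor either (Gauss's lemma), so no
factor of the product of the least denominators can be cancelled.
-/

lemma exists_map_eq_iff {σ R S : Type*} [CommSemiring R] [CommSemiring S] {φ : R →+* S}
    {f : MvPolynomial σ S} :
    (∃ F : MvPolynomial σ R, map φ F = f) ↔ ∀ d, ∃ r : R, φ r = coeff d f := by
  constructor
  · rintro ⟨F, rfl⟩ d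
    exact ⟨coeff d F, (coeff_map φ F d).symm⟩
  · intro hf
    refine mem_range_map_iff_coeffs_subset.2 fun c hc => ?_
    obtain ⟨d, -, rfl⟩ := mem_coeffs_iff.1 hc
    exact hf d

section LeastDenominator

variable {σ R K : Type*} [CommRing R] [CommRing K] [Algebra R K]

lemma map_algebraMap_C_mul (r : R) (F : MvPolynomial σ R) :
    map (algebraMap R K) (C r * F) = r • map (algebraMap R K) F := by
  ext d
  rw [map_mul, map_C, coeff_C_mul, coeff_smul, Algebra.smul_def]

/-- `a` is a least denominator of `f`, that is, a generator of the ideal of those `b : R` for which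
`b • f` has coefficients in `R`. Stating this through divisibility singles out `a` up to associates
without choosing gcds or lcms in `R`. -/
def IsLeastDenominator (a : R) (f : MvPolynomial σ K) : Prop :=
  ∀ b : R, a ∣ b ↔ ∃ F : MvPolynomial σ R, map (algebraMap R K) F = b • f

namespace IsLeastDenominator

lemma associated [IsCancelMulZero R] {a b : R} {f : MvPolynomial σ K}
    (ha : IsLeastDenominator a f) (hb : IsLeastDenominator b f) : Associated a b :=
  associated_of_dvd_dvd ((ha b).2 ((hb b).1 dvd_rfl)) ((hb a).2 ((ha a).1 dvd_rfl))

lemma isUnit_of_C_dvd [IsDomain R] [Nontrivial K] [Module.IsTorsionFree R K]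
    {a r : R} {f : MvPolynomial σ K} {F : MvPolynomial σ R} {d : σ →₀ ℕ}
    (ha : IsLeastDenominator a f) (ha₀ : a ≠ 0) (hf : coeff d f = 1)
    (hF : map (algebraMap R K) F = a • f) (hr : C r ∣ F) : IsUnit r := by
  have coeff_F : coeff d F = a := FaithfulSMul.algebraMap_injective R K <| by
    rw [← coeff_map, hF, coeff_smul, hf, Algebra.smul_def, mul_one]
  obtain ⟨b, rfl⟩ : r ∣ a := coeff_F ▸ (C_dvd_iff_dvd_coeff r F).1 hr d
  obtain ⟨G, rfl⟩ := hr
  have hG : map (algebraMap R K) G = b • f :=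
    smul_right_injective _ (left_ne_zero_of_mul ha₀) <| by
      simpa only [map_algebraMap_C_mul, mul_smul] using hF
  have hb : r * b ∣ 1 * b := by simpa only [one_mul] using (ha b).2 ⟨G, hG⟩
  exact isUnit_of_dvd_one ((mul_dvd_mul_iff_right (right_ne_zero_of_mul ha₀)).1 hb)

end IsLeastDenominator

lemma isRelPrime_C_of_forall_isUnit [NoZeroDivisors R] {a : R} {F : MvPolynomial σ R} (ha : a ≠ 0)
    (hF : ∀ r, C r ∣ F → IsUnit r) : IsRelPrime (C a) F := by
  intro D hDa hDF
  obtain ⟨r, -, rfl⟩ := (dvd_C_iff_exists ha).1 hDa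
  exact (hF r hDF).map C

lemma isLeastDenominator_of_isRelPrime_C [IsDomain R] [UniqueFactorizationMonoid R]
    [FaithfulSMul R K] {a : R} {f : MvPolynomial σ K} {F : MvPolynomial σ R}
    (hF : map (algebraMap R K) F = a • f) (haF : IsRelPrime (C a) F) :
    IsLeastDenominator a f := by
  intro b
  constructor
  · rintro ⟨c, rfl⟩
    exact ⟨C c * F, by rw [map_algebraMap_C_mul, hF, smul_smul, mul_comm]⟩
  · rintro ⟨G, hG⟩
    have cross : C b * F = C a * G :=
      map_injective _ (FaithfulSMul.algebraMap_injective R K) <| by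
        rw [map_algebraMap_C_mul, map_algebraMap_C_mul, hF, hG, smul_comm]
    have hab : C a ∣ C b := haF.dvd_of_dvd_mul_right ⟨G, cross⟩
    simpa using (C_dvd_iff_dvd_coeff a (C b)).1 hab 0

end LeastDenominator

lemma den_dvd_iff_exists_intCast_eq_mul {q : ℚ} {b : ℤ} :
    (q.den : ℤ) ∣ b ↔ ∃ z : ℤ, (z : ℚ) = b * q := by
  constructor
  · rintro ⟨c, rfl⟩
    exact ⟨c * q.num, by push_cast; rw [← Rat.mul_den_eq_num q]; ring⟩
  · rintro ⟨z, hz⟩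
    obtain rfl | hb := eq_or_ne b 0
    · exact dvd_zero _
    have hq : q = Rat.divInt z b := by
      rw [Rat.divInt_eq_div, hz, mul_div_cancel_left₀ _ (Int.cast_ne_zero.2 hb)]
    exact hq ▸ Rat.den_dvd z b

lemma isLeastDenominator_lcm_den {σ : Type*} (f : MvPolynomial σ ℚ) :
    IsLeastDenominator ((f.support.lcm fun d => (coeff d f).den : ℕ) : ℤ) f := by
  intro b
  simp only [exists_map_eq_iff, coeff_smul, algebraMap_int_eq, eq_intCast,
    zsmul_eq_mul (α := ℚ), ← den_dvd_iff_exists_intCast_eq_mul, Int.natCast_dvd, Finset.lcm_dvd_iff]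
  refine forall_congr' fun d => ⟨fun hd => ?_, fun hd _ => hd⟩
  by_cases hdf : d ∈ f.support
  · exact hd hdf
  · simp [notMem_support_iff.1 hdf]

lemma isLeastDenominator_natCast_iff {σ : Type*} {N : ℕ} {f : MvPolynomial σ ℚ} :
    IsLeastDenominator (N : ℤ) f ↔ N = f.support.lcm fun d => (coeff d f).den := by
  constructor
  · exact fun hN => Int.associated_iff_natAbs.1 (hN.associated (isLeastDenominator_lcm_den f))
  · rintro rfl
    exact isLeastDenominator_lcm_den f

theorem lcm_denominators_of_monic_factorization_general {σ ι R K : Type*}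
    [CommRing R] [IsDomain R] [UniqueFactorizationMonoid R]
    [CommRing K] [Nontrivial K] [Algebra R K] [Module.IsTorsionFree R K]
    {s : Finset ι} {a : ι → R} {f : ι → MvPolynomial σ K}
    (ha : ∀ i ∈ s, IsLeastDenominator (a i) (f i)) (ha₀ : ∀ i ∈ s, a i ≠ 0)
    (hf : ∀ i ∈ s, ∃ d, coeff d (f i) = 1) :
    IsLeastDenominator (∏ i ∈ s, a i) (∏ i ∈ s, f i) := by
  choose! F hF using fun i hi => (ha i hi (a i)).1 dvd_rfl
  have map_prod_F : map (algebraMap R K) (∏ i ∈ s, F i) = (∏ i ∈ s, a i) • ∏ i ∈ s, f i := by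
    rw [map_prod, Finset.prod_congr rfl hF, Finset.prod_smul]
  have prod_a_ne_zero : ∏ i ∈ s, a i ≠ 0 := Finset.prod_ne_zero_iff.2 ha₀
  refine isLeastDenominator_of_isRelPrime_C map_prod_F (IsRelPrime.prod_right fun i hi => ?_)
  obtain ⟨d, hd⟩ := hf i hi
  exact isRelPrime_C_of_forall_isUnit prod_a_ne_zero fun r =>
    (ha i hi).isUnit_of_C_dvd (ha₀ i hi) hd (hF i hi)

/-- If `g ∈ ℚ[x₁,…,xₙ]` is monic w.r.t. a monomial order and factors as a
product of polynomials `hᵢ` monic w.r.t. the same order, `N > 0` is the lcm of the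
denominators of the coefficients of `g`, and `Nᵢ > 0` is the lcm of the denominators
of the coefficients of `hᵢ`, then `N = N₁ · N₂ ⋯ Nₘ`. -/
theorem lcm_denominators_of_monic_factorization
    (n : ℕ) (mo : MonomialOrder (Fin n))
    (g : MvPolynomial (Fin n) ℚ) (hg : moMonic mo g)
    (m : ℕ) (h : Fin m → MvPolynomial (Fin n) ℚ)
    (hmonic : ∀ i, moMonic mo (h i))
    (hprod : g = ∏ i, h i)
    (N : ℕ) (hN : N = g.support.lcm fun d => (MvPolynomial.coeff d g).den)
    (hNpos : 0 < N)
    (Ni : Fin m → ℕ)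
    (hNi : ∀ i, Ni i = (h i).support.lcm fun d => (MvPolynomial.coeff d (h i)).den)
    (hNipos : ∀ i, 0 < Ni i) :
    N = ∏ i, Ni i := by
  have prod_isLeastDenominator := lcm_denominators_of_monic_factorization_general
    (fun i (_ : i ∈ Finset.univ) => isLeastDenominator_natCast_iff.2 (hNi i))
    (fun i _ => Int.natCast_ne_zero.2 (hNipos i).ne') fun i _ => ⟨_, hmonic i⟩
  rw [hN, hprod, ← isLeastDenominator_natCast_iff.1 (mod_cast prod_isLeastDenominator)]
end
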